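/- Let C be an arbitrary set of corner minors of M, and let h₁ and v₁ be the vertices of G(C) corresponding to the maximal horizontal and vertical intervals of C containing x₁₁. Then I(C) is a radical ideal if and only if the induced subgraph of G(C) obtained by deleting the vertices v₁ and h₁ contains no cycle. Moreover, if this subgraph contains no cycle, then I(C) = ⋂_{W ∈ 𝒲} P_W(C), an intersection of prime ideals. -/

import Mathlib

open MvPolynomial

/-- A 2-minor `[a₁,a₂|b₁,b₂]` (with `a₁ < a₂`, `b₁ < b₂`) of the `m × n` matrix
of indeterminates `M = (x_{ij})`. -/
structure Minor2 (m n : ℕ) where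
  a1 : Fin m
  a2 : Fin m
  b1 : Fin n
  b2 : Fin n
  ha : a1 < a2
  hb : b1 < b2

namespace Minor2

variable {m n : ℕ}

/-- The vertex set of a 2-minor. -/
def vertexSet (δ : Minor2 m n) : Set (Fin m × Fin n) :=
  {(δ.a1, δ.b1), (δ.a1, δ.b2), (δ.a2, δ.b1), (δ.a2, δ.b2)}

/-- `{p,q}` is one of the two vertical edges of the minor `δ`. -/
def VertEdge (δ : Minor2 m n) (p q : Fin m × Fin n) : Prop :=
  ({p, q} : Set (Fin m × Fin n)) = {(δ.a1, δ.b1), (δ.a2, δ.b1)} ∨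
  ({p, q} : Set (Fin m × Fin n)) = {(δ.a1, δ.b2), (δ.a2, δ.b2)}

/-- `{p,q}` is one of the two horizontal edges of the minor `δ`. -/
def HorizEdge (δ : Minor2 m n) (p q : Fin m × Fin n) : Prop :=
  ({p, q} : Set (Fin m × Fin n)) = {(δ.a1, δ.b1), (δ.a1, δ.b2)} ∨
  ({p, q} : Set (Fin m × Fin n)) = {(δ.a2, δ.b1), (δ.a2, δ.b2)}

/-- `{p,q}` is an edge (vertical or horizontal) of the minor `δ`. -/
def IsEdge (δ : Minor2 m n) (p q : Fin m × Fin n) : Prop :=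
  δ.VertEdge p q ∨ δ.HorizEdge p q

/-- The binomial `f_δ = x_{a₁b₁}x_{a₂b₂} − x_{a₁b₂}x_{a₂b₁}` of the 2-minor `δ`. -/
noncomputable def binom (K : Type*) [Field K] (δ : Minor2 m n) : MvPolynomial (Fin m × Fin n) K :=
  X (δ.a1, δ.b1) * X (δ.a2, δ.b2) - X (δ.a1, δ.b2) * X (δ.a2, δ.b1)

end Minor2

/-- The vertex set `V(C)` of a collection `C` of 2-minors. -/
def vertexSetOf {m n : ℕ} (C : Set (Minor2 m n)) : Set (Fin m × Fin n) :=
  ⋃ δ ∈ C, δ.vertexSet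

/-- The binomial ideal `I(C)` generated by the binomials of the minors in `C`. -/
noncomputable def minorIdeal (K : Type*) [Field K] {m n : ℕ} (C : Set (Minor2 m n)) :
    Ideal (MvPolynomial (Fin m × Fin n) K) :=
  Ideal.span {f | ∃ δ ∈ C, f = Minor2.binom K δ}

/-- Two positions are joined by a vertical edge of some minor of `C`. -/
def vertAdj {m n : ℕ} (C : Set (Minor2 m n)) (p q : Fin m × Fin n) : Prop :=
  ∃ δ ∈ C, δ.VertEdge p q

/-- Two positions are joined by a horizontal edge of some minor of `C`. -/
def horizAdj {m n : ℕ} (C : Set (Minor2 m n)) (p q : Fin m × Fin n) : Prop :=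
  ∃ δ ∈ C, δ.HorizEdge p q

/-- The maximal vertical interval of `C` containing a position, encoded as the class of the
position under connectivity by vertical edges of minors of `C`. -/
def vClass {m n : ℕ} (C : Set (Minor2 m n)) (p : Fin m × Fin n) : Quot (vertAdj C) :=
  Quot.mk _ p

/-- The maximal horizontal interval of `C` containing a position. -/
def hClass {m n : ℕ} (C : Set (Minor2 m n)) (p : Fin m × Fin n) : Quot (horizAdj C) :=
  Quot.mk _ p

/-- The monomial map `φ` with `φ(x_{ab}) = h_i v_j`, where `H_i` and `V_j` are the maximal
horizontal and vertical intervals of `C` containing `x_{ab}` (variables not appearing in any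
minor of `C` are sent to products of fresh variables, so that the kernel of `φ` is the
extension to `S` of the toric ideal `J_C ⊆ S_C`). -/
noncomputable def phiC (K : Type*) [Field K] {m n : ℕ} (C : Set (Minor2 m n)) :
    MvPolynomial (Fin m × Fin n) K →ₐ[K]
      MvPolynomial (Quot (horizAdj C) ⊕ Quot (vertAdj C)) K :=
  aeval fun p => X (Sum.inl (hClass C p)) * X (Sum.inr (vClass C p))

/-- The toric ideal `J_C = ker φ`. -/
noncomputable def toricIdeal (K : Type*) [Field K] {m n : ℕ} (C : Set (Minor2 m n)) :
    Ideal (MvPolynomial (Fin m × Fin n) K) :=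
  RingHom.ker (phiC K C)

/-- A subset `W ⊆ V(C)` is admissible if for every `δ ∈ C` either `W ∩ V(δ) = ∅`
or `W` contains an edge of `δ`. -/
def Admissible {m n : ℕ} (C : Set (Minor2 m n)) (W : Set (Fin m × Fin n)) : Prop :=
  W ⊆ vertexSetOf C ∧
    ∀ δ ∈ C, W ∩ δ.vertexSet = ∅ ∨ ∃ p q, p ∈ W ∧ q ∈ W ∧ δ.IsEdge p q

/-- `C' = {δ ∈ C : V(δ) ∩ W = ∅}`. -/
def minorsAvoiding {m n : ℕ} (C : Set (Minor2 m n)) (W : Set (Fin m × Fin n)) :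
    Set (Minor2 m n) :=
  {δ ∈ C | δ.vertexSet ∩ W = ∅}

/-- The ideal generated by the variables with index in `W`. -/
noncomputable def varIdeal (K : Type*) [Field K] {m n : ℕ} (W : Set (Fin m × Fin n)) :
    Ideal (MvPolynomial (Fin m × Fin n) K) :=
  Ideal.span ((fun p => (X p : MvPolynomial (Fin m × Fin n) K)) '' W)

/-- The prime ideal `P_W(C) = (x_{ij} : x_{ij} ∈ W) + J_{C'}`,
where `C' = {δ ∈ C : V(δ) ∩ W = ∅}`. -/
noncomputable def PW (K : Type*) [Field K] {m n : ℕ} (C : Set (Minor2 m n))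
    (W : Set (Fin m × Fin n)) : Ideal (MvPolynomial (Fin m × Fin n) K) :=
  varIdeal K W + toricIdeal K (minorsAvoiding C W)

/-- A cycle `σ : h_{i₁}, v_{j₁}, h_{i₂}, v_{j₂}, …, h_{i_r}, v_{j_r}` (`r ≥ 2`) of the
bipartite graph `G(C)`, recorded by the intersection vertices
`p k = H_{i_k} ∩ V_{j_k}` and `q k = H_{i_{k+1}} ∩ V_{j_k}` (indices cyclic, `r = len + 2`). -/
structure CycleIn {m n : ℕ} (C : Set (Minor2 m n)) where
  len : ℕ
  p : Fin (len + 2) → Fin m × Fin n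
  q : Fin (len + 2) → Fin m × Fin n
  p_mem : ∀ k, p k ∈ vertexSetOf C
  q_mem : ∀ k, q k ∈ vertexSetOf C
  shareV : ∀ k, vClass C (p k) = vClass C (q k)
  shareH : ∀ k, hClass C (q k) = hClass C (p (k + 1))
  injH : Function.Injective fun k => hClass C (p k)
  injV : Function.Injective fun k => vClass C (p k)

/-- The binomial `f_σ` associated to a cycle `σ` of `G(C)`. -/
noncomputable def cycleBinom (K : Type*) [Field K] {m n : ℕ} {C : Set (Minor2 m n)}
    (σ : CycleIn C) : MvPolynomial (Fin m × Fin n) K :=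
  (∏ k, X (σ.p k)) - (∏ k, X (σ.q k))

/-!
Let `z = x₀₀` and let `J` be the toric ideal of `C`, a prime containing `I = I(C)` but not `z`.
Modulo `z` the corner binomials become monomials `x_{0b} x_{a0}`, so `I + (z)` is a squarefree
monomial ideal, hence radical. If the graph of inner vertices has no cycle then `z J ⊆ I`: two
monomials with the same image under `φ` become equal modulo `I : z` by exchanging along leaves.
These facts together make `I` radical: for `f ∈ √I` write `f = g + a z` with `g ∈ I`; then `a z`,
and so `a`, lies in `J`, whence `a z ∈ I`.

Conversely, a cycle of length `r` with binomial `f` gives `z^r f ∈ I` and so `z f ∈ √I`. But if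
`z f ∈ I`, then `f` vanishes at every point whose zeroth row and column are zero, and the cycle
binomial does not.

Finally, if a prime `P` contains `I`, then the vertices whose variables lie in `P` form an
admissible set `W` with `P_W ⊆ P`, so all minimal primes of `I` are of the form `P_W`.
-/

section AlternatingCycle

variable {α β : Type*} {E : α → β → Prop}

/-- The bipartite graph with edge relation `E` has a cycle `a₀, b₀, a₁, b₁, …` of length at
least four. -/
def HasAlternatingCycle (E : α → β → Prop) : Prop :=
  ∃ (r : ℕ) (a : Fin (r + 2) → α) (b : Fin (r + 2) → β), a.Injective ∧ b.Injective ∧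
    ∀ k, E (a k) (b k) ∧ E (a (k + 1)) (b k)

theorem injective_window_of_no_short_repetition {s : ℕ → α} {d : ℕ}
    (hs : ∀ e, 1 ≤ e → e < d → ∀ i, s i ≠ s (i + e)) (j : ℕ) :
    Function.Injective fun k : Fin d => s (j + k) := by
  intro k l hkl
  wlog hle : k ≤ l generalizing k l
  · exact (this hkl.symm (le_of_not_ge hle)).symm
  by_contra hne
  obtain ⟨e, he⟩ := Nat.exists_eq_add_of_lt (Fin.lt_def.1 (lt_of_le_of_ne hle hne))
  refine hs (e + 1) (by lia) (by lia) (j + k) ?_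
  rw [show j + k + (e + 1) = j + l by rw [he]; ring]
  exact hkl

theorem hasAlternatingCycle_of_window {a : ℕ → α} {b : ℕ → β} {r : ℕ}
    (ha : Function.Injective fun k : Fin (r + 2) => a k)
    (hb : Function.Injective fun k : Fin (r + 2) => b k)
    (hE : ∀ k, E (a k) (b k)) (hE' : ∀ k, E (a (k + 1)) (b k)) (hwrap : E (a 0) (b (r + 1))) :
    HasAlternatingCycle E := by
  refine ⟨r, fun k => a k, fun k => b k, ha, hb, fun k => ⟨hE k, ?_⟩⟩
  by_cases hk : k = Fin.last (r + 1)
  · subst hk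
    simpa using hwrap
  · simpa [Fin.val_add_one, hk] using hE' k

theorem hasAlternatingCycle_of_sequence [Finite α] {a : ℕ → α} {b : ℕ → β}
    (hE : ∀ k, E (a k) (b k)) (hE' : ∀ k, E (a (k + 1)) (b k))
    (ha : ∀ k, a (k + 1) ≠ a k) (hb : ∀ k, b (k + 1) ≠ b k) : HasAlternatingCycle E := by
  classical
  have hex : ∃ d, 1 ≤ d ∧ ∃ i, a i = a (i + d) ∨ b i = b (i + d) := by
    obtain ⟨i, j, hij, heq⟩ := Set.finite_univ.exists_lt_map_eq_of_forall_mem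
      fun k => Set.mem_univ (a k)
    exact ⟨j - i, by lia, i, Or.inl (by rwa [Nat.add_sub_cancel' hij.le])⟩
  -- A shortest repetition closes up to a cycle.
  obtain ⟨hd, i, hi⟩ := Nat.find_spec hex
  have hmin (e) (he : 1 ≤ e) (hed : e < Nat.find hex) (i) : a i ≠ a (i + e) ∧ b i ≠ b (i + e) := by
    have := Nat.find_min hex hed
    push Not at this
    exact this he i
  generalize Nat.find hex = d at hd hi hmin
  have hd1 : d ≠ 1 := by
    rintro rfl
    exact hi.elim (fun h => ha i h.symm) fun h => hb i h.symm
  obtain ⟨r, rfl⟩ : ∃ r, d = r + 2 := ⟨d - 2, by lia⟩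
  have hainj := injective_window_of_no_short_repetition fun e he hed i => (hmin e he hed i).1
  have hbinj := injective_window_of_no_short_repetition fun e he hed i => (hmin e he hed i).2
  obtain hi | hi := hi
  · refine hasAlternatingCycle_of_window (hainj i) (hbinj i) (fun k => hE (i + k))
      (fun k => hE' (i + k)) ?_
    rw [add_zero, hi]
    exact hE' (i + (r + 1))
  · refine hasAlternatingCycle_of_window (hainj (i + 1)) (hbinj (i + 1)) (fun k => hE (i + 1 + k))
      (fun k => hE' (i + 1 + k)) ?_
    rw [add_zero, show i + 1 + (r + 1) = i + (r + 2) by lia, ← hi]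
    exact hE' i

theorem exists_leaf [Finite α] (hE : ¬HasAlternatingCycle E) {T : Set (α × β)}
    (hT : T.Nonempty) (hTE : ∀ p ∈ T, E p.1 p.2) :
    ∃ p ∈ T, (∀ q ∈ T, q.2 = p.2 → q = p) ∨ ∀ q ∈ T, q.1 = p.1 → q = p := by
  by_contra! hleaf
  have hcol (p : T) : ∃ q : T, q.1.2 = p.1.2 ∧ q.1.1 ≠ p.1.1 := by
    obtain ⟨q, hq, h, hne⟩ := (hleaf p p.2).1
    exact ⟨⟨q, hq⟩, h, fun h' => hne (Prod.ext h' h)⟩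
  have hrow (p : T) : ∃ q : T, q.1.1 = p.1.1 ∧ q.1.2 ≠ p.1.2 := by
    obtain ⟨q, hq, h, hne⟩ := (hleaf p p.2).2
    exact ⟨⟨q, hq⟩, h, fun h' => hne (Prod.ext h h')⟩
  choose f hf hf' using hcol
  choose g hg hg' using hrow
  -- Walking alternately along columns and rows never gets stuck.
  let s (k : ℕ) : T := (g ∘ f)^[k] ⟨hT.some, hT.some_mem⟩
  have hs (k) : s (k + 1) = g (f (s k)) := Function.iterate_succ_apply' _ _ _
  refine hE (hasAlternatingCycle_of_sequence (a := fun k => (s k).1.1) (b := fun k => (s k).1.2)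
    (fun k => hTE _ (s k).2) (fun k => ?_) (fun k => ?_) fun k => ?_)
  · simpa only [hs, hg, hf] using hTE _ (f (s k)).2
  · simpa only [hs, hg] using hf' (s k)
  · simpa only [hs, hf] using hg' (f (s k))

end AlternatingCycle

section Exchange

variable {σ α β M : Type*} {r : σ → α} {c : σ → β} {u v w : Multiset σ} {p : σ}

/-- Two multisets of positions, where `r` and `c` give the row and the column of a position, agree
in all row and column counts. -/
def SameMarginals (r : σ → α) (c : σ → β) (u v : Multiset σ) : Prop :=
  u.map r = v.map r ∧ u.map c = v.map c

theorem SameMarginals.symm (h : SameMarginals r c u v) : SameMarginals r c v u :=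
  ⟨h.1.symm, h.2.symm⟩

theorem SameMarginals.trans (huv : SameMarginals r c u v) (hvw : SameMarginals r c v w) :
    SameMarginals r c u w :=
  ⟨huv.1.trans hvw.1, huv.2.trans hvw.2⟩

theorem SameMarginals.eq_zero (h : SameMarginals r c 0 v) : v = 0 :=
  Multiset.map_eq_zero.1 h.1.symm

theorem sameMarginals_cons_iff : SameMarginals r c (p ::ₘ u) (p ::ₘ v) ↔ SameMarginals r c u v := by
  simp only [SameMarginals, Multiset.map_cons, Multiset.cons_inj_right]

/-- Whenever `q` and `s` are elements of `v` in the column and in the row of `p`, the `2`-minor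
with corners `q`, `s`, `p` and a fourth position `t` vanishes under the weights `x`, so that `q, s`
may be exchanged for `p, t` in `v`. -/
def Exchangeable [Mul M] (r : σ → α) (c : σ → β) (x : σ → M) (p : σ) (v : Multiset σ) : Prop :=
  ∀ q ∈ v, ∀ s ∈ v, c q = c p → r s = r p → ∃ t, r t = r q ∧ c t = c s ∧ x q * x s = x p * x t

variable [CommMonoid M] {x : σ → M}

theorem Exchangeable.exists_mem_sameMarginals (hv : Exchangeable r c x p v) (hpu : p ∈ u)
    (hrc : Function.Injective fun p => (r p, c p)) (huv : SameMarginals r c u v) :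
    ∃ v', p ∈ v' ∧ SameMarginals r c v v' ∧ (v.map x).prod = (v'.map x).prod := by
  obtain ⟨q, hq, hqp⟩ := Multiset.mem_map.1 (huv.2 ▸ Multiset.mem_map_of_mem c hpu)
  obtain ⟨s, hs, hsp⟩ := Multiset.mem_map.1 (huv.1 ▸ Multiset.mem_map_of_mem r hpu)
  by_cases hqs : s = q
  · obtain rfl : q = p := hrc (Prod.ext (hqs ▸ hsp) hqp)
    exact ⟨v, hq, ⟨rfl, rfl⟩, rfl⟩
  obtain ⟨t, htq, hts, hx⟩ := hv q hq s hs hqp hsp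
  obtain ⟨w, rfl⟩ := Multiset.exists_cons_of_mem hq
  obtain ⟨w, rfl⟩ := Multiset.exists_cons_of_mem ((Multiset.mem_cons.1 hs).resolve_left hqs)
  refine ⟨p ::ₘ t ::ₘ w, Multiset.mem_cons_self _ _, ⟨?_, ?_⟩, ?_⟩
  · simp only [Multiset.map_cons, htq, hsp, Multiset.cons_swap]
  · simp only [Multiset.map_cons, hqp, hts]
  · simp only [Multiset.map_cons, Multiset.prod_cons, ← mul_assoc, hx]

theorem prod_map_eq_of_mem_of_sameMarginals (hpu : p ∈ u) (hpv : p ∈ v)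
    (huv : SameMarginals r c u v)
    (ih : ∀ u' v', u'.card < u.card → SameMarginals r c u' v' →
      (u'.map x).prod = (v'.map x).prod) :
    (u.map x).prod = (v.map x).prod := by
  obtain ⟨u, rfl⟩ := Multiset.exists_cons_of_mem hpu
  obtain ⟨v, rfl⟩ := Multiset.exists_cons_of_mem hpv
  simp only [Multiset.map_cons, Multiset.prod_cons]
  rw [ih u v (by simp) (sameMarginals_cons_iff.1 huv)]

theorem prod_map_eq_of_exchangeable (hrc : Function.Injective fun p => (r p, c p))
    (hx : ∀ u v, u ≠ 0 → SameMarginals r c u v →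
      (∃ p ∈ u, Exchangeable r c x p v) ∨ ∃ p ∈ v, Exchangeable r c x p u)
    (huv : SameMarginals r c u v) : (u.map x).prod = (v.map x).prod := by
  induction hn : u.card using Nat.strong_induction_on generalizing u v with
  | _ n ih =>
  subst hn
  have ih' (u' v') (hlt : u'.card < u.card) (h : SameMarginals r c u' v') :
      (u'.map x).prod = (v'.map x).prod := ih _ hlt h rfl
  obtain rfl | hu := eq_or_ne u 0
  · rw [huv.eq_zero]
  obtain ⟨p, hpu, hv⟩ | ⟨p, hpv, hu⟩ := hx u v hu huv
  · obtain ⟨v', hpv', hvv', hprod⟩ := hv.exists_mem_sameMarginals hpu hrc huv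
    rw [hprod]
    exact prod_map_eq_of_mem_of_sameMarginals hpu hpv' (huv.trans hvv') ih'
  · obtain ⟨u', hpu', huu', hprod⟩ := hu.exists_mem_sameMarginals hpv hrc huv.symm
    have hcard : u'.card = u.card := by simpa using congrArg Multiset.card huu'.1.symm
    rw [hprod]
    exact prod_map_eq_of_mem_of_sameMarginals hpu' hpv (huu'.symm.trans huv)
      (hcard.symm ▸ ih')

end Exchange

section PolynomialRing

variable {R σ : Type*} [CommRing R]

/-- The endomorphism of a polynomial ring that sets the variables indexed by `W` to zero. -/
noncomputable def killVars (W : Set σ) : MvPolynomial σ R →ₐ[R] MvPolynomial σ R :=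
  open Classical in aeval fun p => if p ∈ W then 0 else X p

theorem killVars_X_of_mem {W : Set σ} {p : σ} (hp : p ∈ W) :
    killVars W (X p : MvPolynomial σ R) = 0 := by
  simp [killVars, hp]

theorem killVars_X_of_notMem {W : Set σ} {p : σ} (hp : p ∉ W) :
    killVars W (X p : MvPolynomial σ R) = X p := by
  simp [killVars, hp]

theorem sub_killVars_mem_span (W : Set σ) (f : MvPolynomial σ R) :
    f - killVars W f ∈ Ideal.span (X '' W) := by
  rw [← Ideal.Quotient.eq]
  suffices h : Ideal.Quotient.mkₐ R (Ideal.span (X '' W)) =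
      (Ideal.Quotient.mkₐ R _).comp (killVars W) from DFunLike.congr_fun h f
  refine algHom_ext fun p => ?_
  by_cases hp : p ∈ W
  · have hX : (X p : MvPolynomial σ R) ∈ Ideal.span (X '' W) :=
      Ideal.subset_span (Set.mem_image_of_mem X hp)
    simpa [killVars_X_of_mem hp, Ideal.Quotient.eq_zero_iff_mem] using hX
  · simp [killVars_X_of_notMem hp]

theorem ker_killVars (W : Set σ) :
    RingHom.ker (killVars W : MvPolynomial σ R →ₐ[R] MvPolynomial σ R) =
      Ideal.span (X '' W) := by
  refine le_antisymm (fun f hf => ?_) ?_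
  · simpa [RingHom.mem_ker.1 hf] using sub_killVars_mem_span W f
  · rw [Ideal.span_le, Set.image_subset_iff]
    exact fun p hp => killVars_X_of_mem hp

theorem killVars_prod_X_eq_zero {W : Set σ} {s : Finset σ} {p : σ} (hs : p ∈ s) (hW : p ∈ W) :
    killVars W (∏ i ∈ s, X i : MvPolynomial σ R) = 0 := by
  rw [map_prod]
  exact Finset.prod_eq_zero hs (killVars_X_of_mem hW)

theorem isRadical_span_prod_X [IsReduced R] (S : Set (Finset σ)) :
    (Ideal.span ((fun s => ∏ i ∈ s, X i : Finset σ → MvPolynomial σ R) '' S)).IsRadical := by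
  classical
  set I := Ideal.span ((fun s => ∏ i ∈ s, X i : Finset σ → MvPolynomial σ R) '' S)
  rintro f ⟨N, hN⟩
  rw [← f.support_sum_monomial_coeff]
  refine Ideal.sum_mem _ fun u hu => ?_
  obtain ⟨s, hs, hsu⟩ : ∃ s ∈ S, s ⊆ u.support := by
    -- Otherwise setting the variables outside `u` to zero kills `I`, but not the term `u` of `f`.
    by_contra! hS
    have hI : I ≤ RingHom.ker (killVars (R := R) {i | i ∉ u.support}) := by
      rw [Ideal.span_le, Set.image_subset_iff]
      intro s hs
      obtain ⟨i, his, hiu⟩ := Finset.not_subset.1 (hS s hs)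
      exact killVars_prod_X_eq_zero his hiu
    have hf : f ∈ Ideal.span (X '' {i | i ∉ u.support}) := by
      rw [← ker_killVars, RingHom.mem_ker]
      have hfN := RingHom.mem_ker.1 (hI hN)
      rw [map_pow] at hfN
      exact eq_zero_of_pow_eq_zero hfN
    obtain ⟨i, hi, hui⟩ := mem_ideal_span_X_image.1 hf u hu
    exact hi (Finsupp.mem_support_iff.2 hui)
  refine I.mem_of_dvd ?_ (Ideal.subset_span ⟨s, hs, rfl⟩)
  rw [monomial_eq, Finsupp.prod]
  exact ((Finset.prod_dvd_prod_of_subset _ _ _ hsu).trans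
    (Finset.prod_dvd_prod_of_dvd _ _ fun i hi =>
      dvd_pow_self _ (Finsupp.mem_support_iff.1 hi))).mul_left _

variable {α β : Type*} {r : σ → α} {c : σ → β}

theorem sameMarginals_toMultiset {u v : σ →₀ ℕ}
    (h : (u.mapDomain r).sumElim (u.mapDomain c) = (v.mapDomain r).sumElim (v.mapDomain c)) :
    SameMarginals r c (Finsupp.toMultiset u) (Finsupp.toMultiset v) := by
  have hr : u.mapDomain r = v.mapDomain r := by
    ext a
    exact DFunLike.congr_fun h (Sum.inl a)
  have hc : u.mapDomain c = v.mapDomain c := by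
    ext b
    exact DFunLike.congr_fun h (Sum.inr b)
  simp only [SameMarginals, Finsupp.toMultiset_map, hr, hc, and_self]

theorem aeval_X_inl_mul_X_inr_monomial (u : σ →₀ ℕ) :
    aeval (fun p => X (Sum.inl (r p)) * X (Sum.inr (c p)) : σ → MvPolynomial (α ⊕ β) R)
        (monomial u (1 : R)) =
      monomial ((u.mapDomain r).sumElim (u.mapDomain c)) 1 := by
  rw [aeval_monomial, monomial_eq, Finsupp.prod_sumElim,
    Finsupp.prod_mapDomain_index (by simp) (by simp [pow_add]),
    Finsupp.prod_mapDomain_index (by simp) (by simp [pow_add]), ← Finsupp.prod_mul]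
  simp only [map_one, one_mul, mul_pow, Function.comp_apply]

theorem ker_le_ker_of_sameMarginals {A : Type*} [CommRing A] [Algebra R A]
    (ι : MvPolynomial σ R →ₐ[R] A)
    (h : ∀ u v, SameMarginals r c u v →
      (u.map fun p => ι (X p)).prod = (v.map fun p => ι (X p)).prod) :
    RingHom.ker (aeval (fun p => X (Sum.inl (r p)) * X (Sum.inr (c p))) :
        MvPolynomial σ R →ₐ[R] MvPolynomial (α ⊕ β) R) ≤ RingHom.ker ι := by
  set e : (σ →₀ ℕ) → (α ⊕ β →₀ ℕ) := fun u =>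
    (u.mapDomain r).sumElim (u.mapDomain c)
  set μ : (σ →₀ ℕ) → A := fun u => ι (monomial u 1)
  have hμ : μ.FactorsThrough e := fun u v huv => by
    simpa only [μ, monomial_eq, map_one, one_mul, map_finsuppProd, map_pow,
      Finsupp.toMultiset_map, Finsupp.prod_toMultiset, Finsupp.prod_mapDomain_index, pow_zero,
      pow_add, implies_true] using h _ _ (sameMarginals_toMultiset huv)
  set φ : MvPolynomial σ R →ₐ[R] MvPolynomial (α ⊕ β) R :=
    aeval fun p => X (Sum.inl (r p)) * X (Sum.inr (c p))
  set ψ := (basisMonomials (α ⊕ β) R).constr R (Function.extend e μ 0)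
  have hψ : ψ ∘ₗ φ.toLinearMap = ι.toLinearMap := by
    refine (basisMonomials σ R).ext fun u => ?_
    have hφ : φ (monomial u 1) = basisMonomials (α ⊕ β) R (e u) := by
      rw [aeval_X_inl_mul_X_inr_monomial, coe_basisMonomials]
    rw [LinearMap.comp_apply, coe_basisMonomials, AlgHom.toLinearMap_apply, hφ,
      Module.Basis.constr_basis, hμ.extend_apply, AlgHom.toLinearMap_apply]
  intro f hf
  simpa [RingHom.mem_ker.1 hf] using (LinearMap.congr_fun hψ f).symm

end PolynomialRing

section CommRing

variable {A : Type*} [CommRing A] {I J : Ideal A} {z : A}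

theorem isRadical_of_le_colon (hJ : J.IsPrime) (hIJ : I ≤ J) (hz : z ∉ J)
    (hcolon : J ≤ I.colon {z}) (hrad : (I ⊔ Ideal.span {z}).IsRadical) : I.IsRadical := by
  intro f hf
  obtain ⟨g, hg, w, hw, rfl⟩ := Submodule.mem_sup.1
    (hrad (Ideal.radical_mono le_sup_left hf))
  obtain ⟨a, rfl⟩ := Ideal.mem_span_singleton'.1 hw
  have haz : a * z ∈ J := by
    have hfJ : g + a * z ∈ J := hJ.radical.le (Ideal.radical_mono hIJ hf)
    simpa using J.sub_mem hfJ (hIJ hg)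
  have ha : a ∈ J := (hJ.mem_or_mem haz).resolve_right hz
  exact I.add_mem hg (Submodule.mem_colon_singleton.1 (hcolon ha))

end CommRing

theorem eq_or_mem_of_quot_mk_eq {ι : Type*} {r : ι → ι → Prop} {s : Set ι}
    (hr : ∀ x y, r x y → x ∈ s ∧ y ∈ s) {x y : ι} (h : Quot.mk r x = Quot.mk r y) :
    x = y ∨ x ∈ s ∧ y ∈ s := by
  let cls : Quot r → Set ι := Quot.lift (fun z => {w | w = z ∨ w ∈ s ∧ z ∈ s}) fun z z' hz => by
    obtain ⟨hz, hz'⟩ := hr z z' hz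
    ext w
    constructor <;> rintro (rfl | hw) <;> simp_all
  have hx : x ∈ cls (Quot.mk r x) := Or.inl rfl
  rwa [h] at hx

section MinorIdeal

variable {m n : ℕ} {C : Set (Minor2 m n)} {δ : Minor2 m n} {p q : Fin m × Fin n}
  {W : Set (Fin m × Fin n)}

theorem Minor2.VertEdge.mem_and_mem_and_snd_eq (h : δ.VertEdge p q) :
    p ∈ δ.vertexSet ∧ q ∈ δ.vertexSet ∧ p.2 = q.2 := by
  simp only [Minor2.VertEdge, Set.pair_eq_pair_iff] at h
  rcases h with (⟨rfl, rfl⟩ | ⟨rfl, rfl⟩) | (⟨rfl, rfl⟩ | ⟨rfl, rfl⟩) <;> simp [Minor2.vertexSet]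

theorem Minor2.HorizEdge.mem_and_mem_and_fst_eq (h : δ.HorizEdge p q) :
    p ∈ δ.vertexSet ∧ q ∈ δ.vertexSet ∧ p.1 = q.1 := by
  simp only [Minor2.HorizEdge, Set.pair_eq_pair_iff] at h
  rcases h with (⟨rfl, rfl⟩ | ⟨rfl, rfl⟩) | (⟨rfl, rfl⟩ | ⟨rfl, rfl⟩) <;> simp [Minor2.vertexSet]

theorem Minor2.vertexSet_subset_vertexSetOf (hδ : δ ∈ C) : δ.vertexSet ⊆ vertexSetOf C :=
  Set.subset_biUnion_of_mem hδ

theorem vertAdj.mem_and_mem (h : vertAdj C p q) : p ∈ vertexSetOf C ∧ q ∈ vertexSetOf C := by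
  obtain ⟨δ, hδ, h⟩ := h
  exact ⟨δ.vertexSet_subset_vertexSetOf hδ h.mem_and_mem_and_snd_eq.1,
    δ.vertexSet_subset_vertexSetOf hδ h.mem_and_mem_and_snd_eq.2.1⟩

theorem horizAdj.mem_and_mem (h : horizAdj C p q) : p ∈ vertexSetOf C ∧ q ∈ vertexSetOf C := by
  obtain ⟨δ, hδ, h⟩ := h
  exact ⟨δ.vertexSet_subset_vertexSetOf hδ h.mem_and_mem_and_fst_eq.1,
    δ.vertexSet_subset_vertexSetOf hδ h.mem_and_mem_and_fst_eq.2.1⟩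

theorem vertAdj.snd_eq (h : vertAdj C p q) : p.2 = q.2 :=
  h.elim fun _ h => h.2.mem_and_mem_and_snd_eq.2.2

theorem horizAdj.fst_eq (h : horizAdj C p q) : p.1 = q.1 :=
  h.elim fun _ h => h.2.mem_and_mem_and_fst_eq.2.2

theorem snd_eq_of_vClass_eq (h : vClass C p = vClass C q) : p.2 = q.2 :=
  congrArg (Quot.lift Prod.snd fun _ _ => vertAdj.snd_eq) h

theorem fst_eq_of_hClass_eq (h : hClass C p = hClass C q) : p.1 = q.1 :=
  congrArg (Quot.lift Prod.fst fun _ _ => horizAdj.fst_eq) h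

theorem eq_or_mem_of_vClass_eq (h : vClass C p = vClass C q) :
    p = q ∨ p ∈ vertexSetOf C ∧ q ∈ vertexSetOf C :=
  eq_or_mem_of_quot_mk_eq (r := vertAdj C) (fun _ _ => vertAdj.mem_and_mem) h

theorem eq_or_mem_of_hClass_eq (h : hClass C p = hClass C q) :
    p = q ∨ p ∈ vertexSetOf C ∧ q ∈ vertexSetOf C :=
  eq_or_mem_of_quot_mk_eq (r := horizAdj C) (fun _ _ => horizAdj.mem_and_mem) h

theorem injective_hClass_vClass (C : Set (Minor2 m n)) :
    Function.Injective fun p => (hClass C p, vClass C p) := fun _ _ h =>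
  Prod.ext (fst_eq_of_hClass_eq (Prod.ext_iff.1 h).1) (snd_eq_of_vClass_eq (Prod.ext_iff.1 h).2)

variable (K : Type*) [Field K]

theorem phiC_X (C : Set (Minor2 m n)) (p : Fin m × Fin n) :
    phiC K C (X p) = X (Sum.inl (hClass C p)) * X (Sum.inr (vClass C p)) := by
  rw [phiC, aeval_X]

theorem X_notMem_toricIdeal (C : Set (Minor2 m n)) (p : Fin m × Fin n) :
    X p ∉ toricIdeal K C := by
  rw [toricIdeal, RingHom.mem_ker, phiC_X]
  exact mul_ne_zero (X_ne_zero _) (X_ne_zero _)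

theorem toricIdeal_isPrime (C : Set (Minor2 m n)) : (toricIdeal K C).IsPrime :=
  RingHom.ker_isPrime _

theorem binom_mem_toricIdeal (hδ : δ ∈ C) : δ.binom K ∈ toricIdeal K C := by
  have hv₁ : vClass C (δ.a1, δ.b1) = vClass C (δ.a2, δ.b1) := Quot.sound ⟨δ, hδ, Or.inl rfl⟩
  have hv₂ : vClass C (δ.a1, δ.b2) = vClass C (δ.a2, δ.b2) := Quot.sound ⟨δ, hδ, Or.inr rfl⟩
  have hh₁ : hClass C (δ.a1, δ.b1) = hClass C (δ.a1, δ.b2) := Quot.sound ⟨δ, hδ, Or.inl rfl⟩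
  have hh₂ : hClass C (δ.a2, δ.b1) = hClass C (δ.a2, δ.b2) := Quot.sound ⟨δ, hδ, Or.inr rfl⟩
  simp only [toricIdeal, RingHom.mem_ker, Minor2.binom, map_sub, map_mul, phiC_X, hv₁, hv₂, hh₁,
    hh₂]
  ring

theorem minorIdeal_le_toricIdeal (C : Set (Minor2 m n)) : minorIdeal K C ≤ toricIdeal K C :=
  Ideal.span_le.2 fun _ ⟨_, hδ, h⟩ => h ▸ binom_mem_toricIdeal K hδ

theorem minorIdeal_mono {C' : Set (Minor2 m n)} (h : C' ⊆ C) : minorIdeal K C' ≤ minorIdeal K C :=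
  Ideal.span_mono fun _ ⟨δ, hδ, hf⟩ => ⟨δ, h hδ, hf⟩

theorem vertexSetOf_minorsAvoiding_subset (C : Set (Minor2 m n)) (W : Set (Fin m × Fin n)) :
    vertexSetOf (minorsAvoiding C W) ⊆ vertexSetOf C :=
  Set.biUnion_subset_biUnion_left (Set.sep_subset _ _)

theorem disjoint_vertexSetOf_minorsAvoiding (C : Set (Minor2 m n)) (W : Set (Fin m × Fin n)) :
    Disjoint (vertexSetOf (minorsAvoiding C W)) W := by
  rw [vertexSetOf, Set.disjoint_iUnion₂_left]
  exact fun δ hδ => Set.disjoint_iff_inter_eq_empty.2 hδ.2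

theorem phiC_minorsAvoiding_killVars (f : MvPolynomial (Fin m × Fin n) K) :
    phiC K (minorsAvoiding C W) (killVars W f) =
      killVars ((Sum.inl ∘ hClass (minorsAvoiding C W)) '' W)
        (phiC K (minorsAvoiding C W) f) := by
  set C' := minorsAvoiding C W
  suffices h : (phiC K C').comp (killVars W) =
      (killVars ((Sum.inl ∘ hClass C') '' W)).comp (phiC K C') from DFunLike.congr_fun h f
  refine algHom_ext fun p => ?_
  have hv : Sum.inr (vClass C' p) ∉ (Sum.inl ∘ hClass C') '' W := by simp
  rw [AlgHom.comp_apply, AlgHom.comp_apply, phiC_X, map_mul, killVars_X_of_notMem hv]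
  by_cases hp : p ∈ W
  · have hh : Sum.inl (hClass C' p) ∈ (Sum.inl ∘ hClass C' : _ → _ ⊕ Quot (vertAdj C')) '' W :=
      ⟨p, hp, rfl⟩
    rw [killVars_X_of_mem hp, killVars_X_of_mem hh, map_zero, zero_mul]
  · have hh : Sum.inl (hClass C' p) ∉ (Sum.inl ∘ hClass C' : _ → _ ⊕ Quot (vertAdj C')) '' W := by
      rintro ⟨q, hq, hqp⟩
      obtain rfl | ⟨hqC, -⟩ := eq_or_mem_of_hClass_eq (Sum.inl_injective hqp)
      · exact hp hq
      · exact (disjoint_vertexSetOf_minorsAvoiding C W).notMem_of_mem_left hqC hq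
    rw [killVars_X_of_notMem hp, killVars_X_of_notMem hh, phiC_X]

theorem mem_PW_iff {f : MvPolynomial (Fin m × Fin n) K} :
    f ∈ PW K C W ↔ killVars W f ∈ toricIdeal K (minorsAvoiding C W) := by
  constructor
  · intro hf
    obtain ⟨g, hg, h, hh, rfl⟩ := Submodule.mem_sup.1 hf
    have hg' : killVars W g = 0 := by rwa [varIdeal, ← ker_killVars, RingHom.mem_ker] at hg
    rw [map_add, hg', zero_add, toricIdeal, RingHom.mem_ker, phiC_minorsAvoiding_killVars,
      RingHom.mem_ker.1 hh, map_zero]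
  · intro hf
    rw [← sub_add_cancel f (killVars W f)]
    exact Submodule.add_mem_sup (sub_killVars_mem_span W f) hf

theorem PW_isPrime (C : Set (Minor2 m n)) (W : Set (Fin m × Fin n)) : (PW K C W).IsPrime := by
  have hcomap : PW K C W = (toricIdeal K (minorsAvoiding C W)).comap (killVars W) :=
    Ideal.ext fun _ => mem_PW_iff K
  have := toricIdeal_isPrime K (minorsAvoiding C W)
  rw [hcomap]
  infer_instance

theorem Minor2.IsEdge.binom_mem_varIdeal (h : δ.IsEdge p q) (hp : p ∈ W) (hq : q ∈ W) :
    δ.binom K ∈ varIdeal K W := by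
  have hX {w} (hw : w ∈ W) : X w ∈ varIdeal K W := Ideal.subset_span (Set.mem_image_of_mem X hw)
  have hpq : ({p, q} : Set _) ⊆ W := Set.pair_subset hp hq
  rcases h with (h | h) | (h | h) <;> rw [h, Set.pair_subset_iff] at hpq
  · exact sub_mem (Ideal.mul_mem_right _ _ (hX hpq.1)) (Ideal.mul_mem_left _ _ (hX hpq.2))
  · exact sub_mem (Ideal.mul_mem_left _ _ (hX hpq.2)) (Ideal.mul_mem_right _ _ (hX hpq.1))
  · exact sub_mem (Ideal.mul_mem_right _ _ (hX hpq.1)) (Ideal.mul_mem_right _ _ (hX hpq.2))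
  · exact sub_mem (Ideal.mul_mem_left _ _ (hX hpq.2)) (Ideal.mul_mem_left _ _ (hX hpq.1))

theorem Admissible.minorIdeal_le_PW (hW : Admissible C W) : minorIdeal K C ≤ PW K C W := by
  refine Ideal.span_le.2 ?_
  rintro _ ⟨δ, hδ, rfl⟩
  obtain hdisj | ⟨p, q, hp, hq, hpq⟩ := hW.2 δ hδ
  · exact Ideal.mem_sup_right (binom_mem_toricIdeal K ⟨hδ, by rwa [Set.inter_comm]⟩)
  · exact Ideal.mem_sup_left (hpq.binom_mem_varIdeal K hp hq)

variable {K}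

/-- The positions of `V(C)` whose variables lie in an ideal `P`; for a prime `P ⊇ I(C)` this is the
admissible set `W` with `P_W(C) ⊆ P`. -/
def verticesIn (C : Set (Minor2 m n)) (P : Ideal (MvPolynomial (Fin m × Fin n) K)) :
    Set (Fin m × Fin n) :=
  {p ∈ vertexSetOf C | X p ∈ P}

variable {P : Ideal (MvPolynomial (Fin m × Fin n) K)}

theorem varIdeal_verticesIn_le : varIdeal K (verticesIn C P) ≤ P :=
  Ideal.span_le.2 (Set.image_subset_iff.2 fun _ hp => hp.2)

theorem X_notMem_of_mem_vertexSetOf_minorsAvoiding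
    (hp : p ∈ vertexSetOf (minorsAvoiding C (verticesIn C P))) : X p ∉ P := fun hX =>
  (disjoint_vertexSetOf_minorsAvoiding C _).notMem_of_mem_left hp
    ⟨vertexSetOf_minorsAvoiding_subset C _ hp, hX⟩

theorem admissible_verticesIn [hP : P.IsPrime] (hI : minorIdeal K C ≤ P) :
    Admissible C (verticesIn C P) := by
  refine ⟨Set.sep_subset _ _, fun δ hδ => or_iff_not_imp_left.2 fun hne => ?_⟩
  have hV {p} (hp : p ∈ δ.vertexSet) (hX : X p ∈ P) : p ∈ verticesIn C P :=
    ⟨δ.vertexSet_subset_vertexSetOf hδ hp, hX⟩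
  have hbinom : δ.binom K ∈ P := hI (Ideal.subset_span ⟨δ, hδ, rfl⟩)
  have hdiag : (X (δ.a1, δ.b1) ∈ P ∨ X (δ.a2, δ.b2) ∈ P) ↔
      (X (δ.a1, δ.b2) ∈ P ∨ X (δ.a2, δ.b1) ∈ P) := by
    rw [← hP.mul_mem_iff_mem_or_mem, ← hP.mul_mem_iff_mem_or_mem, ← Ideal.Quotient.eq_zero_iff_mem,
      ← Ideal.Quotient.eq_zero_iff_mem, Ideal.Quotient.eq.2 hbinom]
  obtain ⟨p, ⟨-, hpP⟩, hp⟩ := Set.nonempty_iff_ne_empty.2 hne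
  obtain ⟨h₁, h₂⟩ : (X (δ.a1, δ.b1) ∈ P ∨ X (δ.a2, δ.b2) ∈ P) ∧
      (X (δ.a1, δ.b2) ∈ P ∨ X (δ.a2, δ.b1) ∈ P) := by
    rcases hp with rfl | rfl | rfl | rfl <;> tauto
  rcases h₁ with h₁ | h₁ <;> rcases h₂ with h₂ | h₂
  · exact ⟨_, _, hV (by simp [Minor2.vertexSet]) h₁, hV (by simp [Minor2.vertexSet]) h₂,
      Or.inr (Or.inl rfl)⟩
  · exact ⟨_, _, hV (by simp [Minor2.vertexSet]) h₁, hV (by simp [Minor2.vertexSet]) h₂,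
      Or.inl (Or.inl rfl)⟩
  · exact ⟨_, _, hV (by simp [Minor2.vertexSet]) h₂, hV (by simp [Minor2.vertexSet]) h₁,
      Or.inl (Or.inr rfl)⟩
  · exact ⟨_, _, hV (by simp [Minor2.vertexSet]) h₂, hV (by simp [Minor2.vertexSet]) h₁,
      Or.inr (Or.inr rfl)⟩

end MinorIdeal

section Corner

variable {m n : ℕ} [NeZero m] [NeZero n] {C : Set (Minor2 m n)} {p q : Fin m × Fin n}
  {K : Type*} [Field K]

/-- A set of corner minors; the corner has index `(0, 0)`. -/
def IsCornerSet (C : Set (Minor2 m n)) : Prop :=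
  ∀ δ ∈ C, δ.a1 = 0 ∧ δ.b1 = 0

theorem IsCornerSet.minorsAvoiding (hC : IsCornerSet C) (W : Set (Fin m × Fin n)) :
    IsCornerSet (minorsAvoiding C W) := fun δ hδ => hC δ hδ.1

theorem IsCornerSet.mem_vertexSet_iff (hC : IsCornerSet C) {δ : Minor2 m n} (hδ : δ ∈ C) :
    p ∈ δ.vertexSet ↔
      p = (0, 0) ∨ p = (0, δ.b2) ∨ p = (δ.a2, 0) ∨ p = (δ.a2, δ.b2) := by
  rw [Minor2.vertexSet, (hC δ hδ).1, (hC δ hδ).2]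
  rfl

theorem IsCornerSet.exists_minor_of_mem (hC : IsCornerSet C) (hp : p ∈ vertexSetOf C) :
    ∃ δ ∈ C, (p.1 = 0 ∨ p.1 = δ.a2) ∧ (p.2 = 0 ∨ p.2 = δ.b2) := by
  obtain ⟨δ, hδ, hpδ⟩ := Set.mem_iUnion₂.1 hp
  refine ⟨δ, hδ, ?_⟩
  rcases (hC.mem_vertexSet_iff hδ).1 hpδ with rfl | rfl | rfl | rfl <;> simp

theorem IsCornerSet.mem_vertexSetOf (hC : IsCornerSet C) {δ : Minor2 m n} (hδ : δ ∈ C)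
    (h₁ : p.1 = 0 ∨ p.1 = δ.a2) (h₂ : p.2 = 0 ∨ p.2 = δ.b2) : p ∈ vertexSetOf C := by
  refine δ.vertexSet_subset_vertexSetOf hδ ((hC.mem_vertexSet_iff hδ).2 ?_)
  simp only [Prod.ext_iff]
  tauto

theorem IsCornerSet.row_zero_mem (hC : IsCornerSet C) (hp : p ∈ vertexSetOf C) :
    (0, p.2) ∈ vertexSetOf C :=
  have ⟨_, hδ, _, h₂⟩ := hC.exists_minor_of_mem hp
  hC.mem_vertexSetOf hδ (Or.inl rfl) h₂

theorem IsCornerSet.col_zero_mem (hC : IsCornerSet C) (hp : p ∈ vertexSetOf C) :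
    (p.1, 0) ∈ vertexSetOf C :=
  have ⟨_, hδ, h₁, _⟩ := hC.exists_minor_of_mem hp
  hC.mem_vertexSetOf hδ h₁ (Or.inl rfl)

theorem IsCornerSet.zero_mem (hC : IsCornerSet C) (hp : p ∈ vertexSetOf C) :
    (0, 0) ∈ vertexSetOf C :=
  hC.row_zero_mem (hC.col_zero_mem hp)

theorem IsCornerSet.vClass_row_zero (hC : IsCornerSet C) (hp : p ∈ vertexSetOf C) :
    vClass C (0, p.2) = vClass C p := by
  obtain ⟨δ, hδ, h₁, h₂⟩ := hC.exists_minor_of_mem hp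
  obtain ⟨i, j⟩ := p
  rcases h₁ with rfl | rfl
  · rfl
  · refine Quot.sound ⟨δ, hδ, ?_⟩
    rcases h₂ with rfl | rfl <;> simp [Minor2.VertEdge, hC δ hδ]

theorem IsCornerSet.hClass_col_zero (hC : IsCornerSet C) (hp : p ∈ vertexSetOf C) :
    hClass C (p.1, 0) = hClass C p := by
  obtain ⟨δ, hδ, h₁, h₂⟩ := hC.exists_minor_of_mem hp
  obtain ⟨i, j⟩ := p
  rcases h₂ with rfl | rfl
  · rfl
  · refine Quot.sound ⟨δ, hδ, ?_⟩
    rcases h₁ with rfl | rfl <;> simp [Minor2.HorizEdge, hC δ hδ]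

theorem IsCornerSet.vClass_eq_iff (hC : IsCornerSet C) (hp : p ∈ vertexSetOf C)
    (hq : q ∈ vertexSetOf C) : vClass C p = vClass C q ↔ p.2 = q.2 := by
  refine ⟨snd_eq_of_vClass_eq, fun h => ?_⟩
  rw [← hC.vClass_row_zero hp, ← hC.vClass_row_zero hq, h]

theorem IsCornerSet.hClass_eq_iff (hC : IsCornerSet C) (hp : p ∈ vertexSetOf C)
    (hq : q ∈ vertexSetOf C) : hClass C p = hClass C q ↔ p.1 = q.1 := by
  refine ⟨fst_eq_of_hClass_eq, fun h => ?_⟩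
  rw [← hC.hClass_col_zero hp, ← hC.hClass_col_zero hq, h]

variable (K) in
/-- The binomial `x₀₀ x_{ab} - x_{0b} x_{a0}` of the corner minor with lower right vertex
`p = (a, b)`, extended by the same formula to row `0` and column `0`, where it is zero. -/
noncomputable def cornerBinom (p : Fin m × Fin n) : MvPolynomial (Fin m × Fin n) K :=
  X (0, 0) * X p - X (0, p.2) * X (p.1, 0)

theorem IsCornerSet.binom_eq (hC : IsCornerSet C) {δ : Minor2 m n} (hδ : δ ∈ C) :
    δ.binom K = cornerBinom K (δ.a2, δ.b2) := by
  rw [Minor2.binom, cornerBinom, (hC δ hδ).1, (hC δ hδ).2]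

theorem IsCornerSet.cornerBinom_mem (hC : IsCornerSet C) (hp : p ∈ vertexSetOf C) :
    cornerBinom K p ∈ minorIdeal K C := by
  obtain ⟨δ, hδ, h₁, h₂⟩ := hC.exists_minor_of_mem hp
  obtain ⟨i, j⟩ := p
  rcases h₁ with rfl | rfl
  · simp [cornerBinom, mul_comm]
  rcases h₂ with rfl | rfl
  · simp [cornerBinom]
  · exact hC.binom_eq (K := K) hδ ▸ Ideal.subset_span ⟨δ, hδ, rfl⟩

/-- The inner vertices of `C`, viewed as the edges of the graph `G(C)` with the vertices `v₁` and
`h₁` deleted: rows and columns stand for their intervals. -/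
def InnerEdge (C : Set (Minor2 m n)) (a : Fin m) (b : Fin n) : Prop :=
  (a, b) ∈ vertexSetOf C ∧ a ≠ 0 ∧ b ≠ 0

theorem IsCornerSet.minorIdeal_eq_span (hC : IsCornerSet C) :
    minorIdeal K C = Ideal.span (cornerBinom K '' {p | InnerEdge C p.1 p.2}) := by
  refine le_antisymm (Ideal.span_mono ?_) (Ideal.span_le.2 ?_)
  · rintro _ ⟨δ, hδ, rfl⟩
    have ha := (hC δ hδ).1 ▸ δ.ha.ne'
    have hb := (hC δ hδ).2 ▸ δ.hb.ne'
    exact ⟨(δ.a2, δ.b2), ⟨hC.mem_vertexSetOf hδ (Or.inr rfl) (Or.inr rfl), ha, hb⟩,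
      (hC.binom_eq hδ).symm⟩
  · rintro _ ⟨p, hp, rfl⟩
    exact hC.cornerBinom_mem hp.1

theorem IsCornerSet.toricIdeal_le_ker (hC : IsCornerSet C) {A : Type*} [CommRing A] [Algebra K A]
    (ι : MvPolynomial (Fin m × Fin n) K →ₐ[K] A) (hI : minorIdeal K C ≤ RingHom.ker ι)
    (hunit : (0, 0) ∈ vertexSetOf C → IsUnit (ι (X (0, 0)))) :
    toricIdeal K C ≤ RingHom.ker ι := by
  classical
  -- `x_{ab} = x_{a0} · (x₀₀⁻¹ x_{0b})` factors `ι` through `φ`.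
  let H (p : Fin m × Fin n) : A := if p ∈ vertexSetOf C then ι (X (p.1, 0)) else ι (X p)
  let V (p : Fin m × Fin n) : A :=
    if p ∈ vertexSetOf C then Ring.inverse (ι (X (0, 0))) * ι (X (0, p.2)) else 1
  have hH (p q) (h : horizAdj C p q) : H p = H q := by
    simp only [H, if_pos h.mem_and_mem.1, if_pos h.mem_and_mem.2, h.fst_eq]
  have hV (p q) (h : vertAdj C p q) : V p = V q := by
    simp only [V, if_pos h.mem_and_mem.1, if_pos h.mem_and_mem.2, h.snd_eq]
  have hHV (p) : H p * V p = ι (X p) := by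
    by_cases hp : p ∈ vertexSetOf C
    · have hbinom := RingHom.mem_ker.1 (hI (hC.cornerBinom_mem hp))
      rw [cornerBinom, map_sub, map_mul, map_mul, sub_eq_zero, mul_comm (ι (X (0, p.2)))] at hbinom
      simp only [H, V, if_pos hp]
      rw [mul_left_comm, ← hbinom, Ring.inverse_mul_cancel_left _ _ (hunit (hC.zero_mem hp))]
    · simp only [H, V, if_neg hp, mul_one]
  let ψ : MvPolynomial (Quot (horizAdj C) ⊕ Quot (vertAdj C)) K →ₐ[K] A :=
    aeval (Sum.elim (Quot.lift H hH) (Quot.lift V hV))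
  have hψ : ψ.comp (phiC K C) = ι := algHom_ext fun p => by
    simp only [AlgHom.comp_apply, phiC_X, map_mul, ψ, aeval_X, Sum.elim_inl, Sum.elim_inr]
    exact hHV p
  intro f hf
  rw [RingHom.mem_ker, ← hψ, AlgHom.comp_apply, RingHom.mem_ker.1 hf, map_zero]

variable {P : Ideal (MvPolynomial (Fin m × Fin n) K)}

theorem IsCornerSet.toricIdeal_le_of_isPrime [hP : P.IsPrime] (hC : IsCornerSet C)
    (hI : minorIdeal K C ≤ P) (hX : (0, 0) ∈ vertexSetOf C → X (0, 0) ∉ P) :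
    toricIdeal K C ≤ P := by
  let F := FractionRing (MvPolynomial (Fin m × Fin n) K ⧸ P)
  let ι : MvPolynomial (Fin m × Fin n) K →ₐ[K] F :=
    (IsScalarTower.toAlgHom K (MvPolynomial (Fin m × Fin n) K ⧸ P) F).comp
      (Ideal.Quotient.mkₐ K P)
  have hι (f) : ι f = 0 ↔ f ∈ P := by
    simp only [ι, AlgHom.comp_apply, IsScalarTower.coe_toAlgHom', F,
      FaithfulSMul.algebraMap_eq_zero_iff, Ideal.Quotient.mkₐ_eq_mk,
      Ideal.Quotient.eq_zero_iff_mem]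
  refine fun f hf => (hι f).1 (hC.toricIdeal_le_ker ι (fun g hg => (hι g).2 (hI hg)) ?_ hf)
  exact fun hz => isUnit_iff_ne_zero.2 (mt (hι _).1 (hX hz))

theorem IsCornerSet.PW_verticesIn_le [P.IsPrime] (hC : IsCornerSet C) (hI : minorIdeal K C ≤ P) :
    PW K C (verticesIn C P) ≤ P := by
  refine sup_le varIdeal_verticesIn_le ((hC.minorsAvoiding _).toricIdeal_le_of_isPrime ?_ fun hz =>
    X_notMem_of_mem_vertexSetOf_minorsAvoiding hz)
  exact (minorIdeal_mono K (Set.sep_subset _ _)).trans hI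

theorem IsCornerSet.minorIdeal_eq_iInf_PW (hC : IsCornerSet C)
    (hrad : (minorIdeal K C).IsRadical) :
    minorIdeal K C = ⨅ W ∈ {W : Set (Fin m × Fin n) |
      Admissible C W ∧ PW K C W ∈ (minorIdeal K C).minimalPrimes}, PW K C W := by
  refine le_antisymm (le_iInf₂ fun W hW => hW.1.minorIdeal_le_PW K) ?_
  conv_rhs => rw [← hrad.radical, ← Ideal.sInf_minimalPrimes]
  refine le_sInf fun P hP => ?_
  have := hP.1.1
  have hW := admissible_verticesIn hP.1.2
  have hPW : PW K C (verticesIn C P) = P := (hC.PW_verticesIn_le hP.1.2).antisymm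
    (hP.2 ⟨PW_isPrime K C _, hW.minorIdeal_le_PW K⟩ (hC.PW_verticesIn_le hP.1.2))
  exact (iInf₂_le _ ⟨hW, hPW.symm ▸ hP⟩).trans hPW.le

theorem IsCornerSet.innerEdge_of_hClass_ne (hC : IsCornerSet C) (hp : p ∈ vertexSetOf C)
    (hv : vClass C p ≠ vClass C (0, 0)) (hh : hClass C p ≠ hClass C (0, 0)) :
    InnerEdge C p.1 p.2 :=
  ⟨hp, fun h => hh ((hC.hClass_eq_iff hp (hC.zero_mem hp)).2 h),
    fun h => hv ((hC.vClass_eq_iff hp (hC.zero_mem hp)).2 h)⟩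

theorem IsCornerSet.exists_cycleIn_iff_hasAlternatingCycle (hC : IsCornerSet C) :
    (∃ σ : CycleIn C,
        (∀ k, vClass C (σ.p k) ≠ vClass C ((0 : Fin m), (0 : Fin n))) ∧
        (∀ k, hClass C (σ.p k) ≠ hClass C ((0 : Fin m), (0 : Fin n)))) ↔
      HasAlternatingCycle (InnerEdge C) := by
  constructor
  · rintro ⟨σ, hv, hh⟩
    refine ⟨σ.len, fun k => (σ.p k).1, fun k => (σ.p k).2, fun k l hkl => ?_, fun k l hkl => ?_,
      fun k => ⟨hC.innerEdge_of_hClass_ne (σ.p_mem k) (hv k) (hh k), ?_⟩⟩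
    · exact σ.injH ((hC.hClass_eq_iff (σ.p_mem k) (σ.p_mem l)).2 hkl)
    · exact σ.injV ((hC.vClass_eq_iff (σ.p_mem k) (σ.p_mem l)).2 hkl)
    · simp only [← fst_eq_of_hClass_eq (σ.shareH k), snd_eq_of_vClass_eq (σ.shareV k)]
      exact hC.innerEdge_of_hClass_ne (σ.q_mem k) (σ.shareV k ▸ hv k) (σ.shareH k ▸ hh (k + 1))
  · rintro ⟨r, a, b, ha, hb, hE⟩
    exact ⟨{
      len := r
      p := fun k => (a k, b k)
      q := fun k => (a (k + 1), b k)
      p_mem := fun k => (hE k).1.1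
      q_mem := fun k => (hE k).2.1
      shareV := fun k => (hC.vClass_eq_iff (hE k).1.1 (hE k).2.1).2 rfl
      shareH := fun k => (hC.hClass_eq_iff (hE k).2.1 (hE (k + 1)).1.1).2 rfl
      injH := fun k l hkl => ha (fst_eq_of_hClass_eq hkl)
      injV := fun k l hkl => hb (snd_eq_of_vClass_eq hkl) },
      fun k h => (hE k).1.2.2 (snd_eq_of_vClass_eq h),
      fun k h => (hE k).1.2.1 (fst_eq_of_hClass_eq h)⟩

/-- Give `x₀₀` weight `2`, the other variables of row and column `0` weight `1` and the inner
variables weight `0`. On the polynomials of weight `2`, evaluate the inner variables at `x`, and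
send `x₀₀` to `1` and `x_{a0} x_{0b}` to the value of `x_{ab}`; for `x` zero on row and column `0`
this linear functional vanishes on corner ideals. -/
noncomputable def weightTwoFunctional (x : Fin m × Fin n → K)
    (f : MvPolynomial (Fin m × Fin n) K) : K :=
  eval x (pderiv (0, 0) f) +
    ∑ p, x p * eval x (pderiv (0, p.2) (pderiv (p.1, 0) f))

variable {x : Fin m × Fin n → K}

theorem pderiv_zero_cornerBinom (hq : q.1 ≠ 0 ∧ q.2 ≠ 0) :
    pderiv (0, 0) (cornerBinom K q) = X q := by
  simp [cornerBinom, Derivation.leibniz, pderiv_X, Prod.ext_iff, hq.1, hq.2]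

theorem pderiv_row_zero_cornerBinom (hq : q.1 ≠ 0) {b : Fin n} (hb : b ≠ 0) :
    pderiv (0, b) (cornerBinom K q) = if b = q.2 then -X (q.1, 0) else 0 := by
  split_ifs with h
  · subst h
    simp [cornerBinom, Derivation.leibniz, pderiv_X, Prod.ext_iff, hq, hb.symm]
  · simp [cornerBinom, Derivation.leibniz, pderiv_X, Prod.ext_iff, hq, hb.symm, Ne.symm h]

theorem pderiv_col_zero_cornerBinom (hq : q.2 ≠ 0) {a : Fin m} (ha : a ≠ 0) :
    pderiv (a, 0) (cornerBinom K q) = if a = q.1 then -X (0, q.2) else 0 := by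
  split_ifs with h
  · subst h
    simp [cornerBinom, Derivation.leibniz, pderiv_X, Prod.ext_iff, hq, ha.symm]
  · simp [cornerBinom, Derivation.leibniz, pderiv_X, Prod.ext_iff, hq, ha.symm, Ne.symm h]

theorem weightTwoFunctional_mul_cornerBinom (hx : ∀ p, x p ≠ 0 → p.1 ≠ 0 ∧ p.2 ≠ 0)
    (hq : q.1 ≠ 0 ∧ q.2 ≠ 0) (u : MvPolynomial (Fin m × Fin n) K) :
    weightTwoFunctional x (u * cornerBinom K q) = 0 := by
  have hrow (b) : x (0, b) = 0 := by_contra fun h => (hx _ h).1 rfl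
  have hcol (a) : x (a, 0) = 0 := by_contra fun h => (hx _ h).2 rfl
  have hval : eval x (cornerBinom K q) = 0 := by simp [cornerBinom, hrow]
  have hpderiv : eval x (pderiv (0, 0) (u * cornerBinom K q)) = eval x u * x q := by
    simp [Derivation.leibniz, pderiv_zero_cornerBinom hq, hval]
  have hpderiv₂ (p) (hp : p.1 ≠ 0 ∧ p.2 ≠ 0) :
      eval x (pderiv (0, p.2) (pderiv (p.1, 0) (u * cornerBinom K q))) =
        if p = q then -eval x u else 0 := by
    have hpcol : eval x (pderiv (p.1, 0) (cornerBinom K q)) = 0 := by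
      simp [pderiv_col_zero_cornerBinom hq.2 hp.1, apply_ite, hrow]
    have hprow : eval x (pderiv (0, p.2) (cornerBinom K q)) = 0 := by
      simp [pderiv_row_zero_cornerBinom hq.1 hp.2, apply_ite, hcol]
    have hmixed : eval x (pderiv (0, p.2) (pderiv (p.1, 0) (cornerBinom K q))) =
        if p = q then -1 else 0 := by
      rw [pderiv_col_zero_cornerBinom hq.2 hp.1]
      split_ifs <;> simp_all [pderiv_X, Prod.ext_iff, eq_comm]
    simp [Derivation.leibniz, hval, hpcol, hprow, hmixed]
  have hsum : ∑ p, x p * eval x (pderiv (0, p.2) (pderiv (p.1, 0) (u * cornerBinom K q))) =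
      -(eval x u * x q) := by
    rw [Fintype.sum_eq_single q fun p hpq => ?_, hpderiv₂ q hq, if_pos rfl]
    · ring
    · by_cases hp : x p = 0
      · rw [hp, zero_mul]
      · rw [hpderiv₂ p (hx p hp), if_neg hpq, mul_zero]
  rw [weightTwoFunctional, hpderiv, hsum, add_neg_cancel]

theorem weightTwoFunctional_X_zero_mul (hx : ∀ p, x p ≠ 0 → p.1 ≠ 0 ∧ p.2 ≠ 0)
    (f : MvPolynomial (Fin m × Fin n) K) :
    weightTwoFunctional x (X (0, 0) * f) = eval x f := by
  have hz : x (0, 0) = 0 := by_contra fun h => (hx _ h).1 rfl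
  have hsum (p) : x p * eval x (pderiv (0, p.2) (pderiv (p.1, 0) (X (0, 0) * f))) = 0 := by
    by_cases hp : x p = 0
    · rw [hp, zero_mul]
    · obtain ⟨h₁, h₂⟩ := hx p hp
      simp [Derivation.leibniz, pderiv_X, hz, h₁.symm, h₂.symm, Prod.ext_iff]
  rw [weightTwoFunctional, Finset.sum_eq_zero fun p _ => hsum p]
  simp [hz, Derivation.leibniz, pderiv_X]

theorem IsCornerSet.weightTwoFunctional_eq_zero (hC : IsCornerSet C)
    (hx : ∀ p, x p ≠ 0 → p.1 ≠ 0 ∧ p.2 ≠ 0) {f : MvPolynomial (Fin m × Fin n) K}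
    (hf : f ∈ minorIdeal K C) : weightTwoFunctional x f = 0 := by
  rw [hC.minorIdeal_eq_span] at hf
  suffices h : ∀ u, weightTwoFunctional x (u * f) = 0 by simpa using h 1
  induction hf using Submodule.span_induction with
  | mem _ hg =>
    obtain ⟨q, hq, rfl⟩ := hg
    exact weightTwoFunctional_mul_cornerBinom hx hq.2
  | zero => simp [weightTwoFunctional]
  | add g h _ _ ihg ihh =>
    intro u
    have hadd : weightTwoFunctional x (u * g) + weightTwoFunctional x (u * h) = 0 := by
      rw [ihg, ihh, add_zero]
    rw [← hadd, weightTwoFunctional, weightTwoFunctional, weightTwoFunctional, add_add_add_comm,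
      ← Finset.sum_add_distrib]
    simp only [mul_add, map_add]
  | smul v g _ ih => exact fun u => by rw [smul_eq_mul, ← mul_assoc]; exact ih (u * v)

theorem IsCornerSet.eval_eq_zero_of_X_zero_mul_mem (hC : IsCornerSet C)
    (hx : ∀ p, x p ≠ 0 → p.1 ≠ 0 ∧ p.2 ≠ 0) {f : MvPolynomial (Fin m × Fin n) K}
    (hf : X (0, 0) * f ∈ minorIdeal K C) : eval x f = 0 := by
  rw [← weightTwoFunctional_X_zero_mul hx, hC.weightTwoFunctional_eq_zero hx hf]

theorem IsCornerSet.X_zero_pow_mul_sub_mem (hC : IsCornerSet C) {ι : Type*} [Fintype ι]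
    {a : ι → Fin m} {b : ι → Fin n} (e : Equiv.Perm ι)
    (hab : ∀ k, (a k, b k) ∈ vertexSetOf C) (hab' : ∀ k, (a (e k), b k) ∈ vertexSetOf C) :
    X (0, 0) ^ Fintype.card ι * ((∏ k, X (a k, b k)) - ∏ k, X (a (e k), b k)) ∈
      minorIdeal K C := by
  have hmk {i : Fin m} {j : Fin n} (h : (i, j) ∈ vertexSetOf C) :
      Ideal.Quotient.mk (minorIdeal K C) (X (0, 0)) * Ideal.Quotient.mk _ (X (i, j)) =
        Ideal.Quotient.mk _ (X (0, j)) * Ideal.Quotient.mk _ (X (i, 0)) :=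
    Ideal.Quotient.eq.2 (hC.cornerBinom_mem h)
  rw [mul_sub, ← Ideal.Quotient.eq]
  simp only [map_mul, map_prod, ← Finset.card_univ, ← Finset.prod_const,
    ← Finset.prod_mul_distrib, hmk (hab _), hmk (hab' _)]
  simp only [Finset.prod_mul_distrib]
  rw [Equiv.prod_comp e fun k => Ideal.Quotient.mk (minorIdeal K C) (X (a k, 0))]

theorem IsCornerSet.not_isRadical_of_hasAlternatingCycle (hC : IsCornerSet C)
    (hcycle : HasAlternatingCycle (InnerEdge C)) : ¬(minorIdeal K C).IsRadical := by
  classical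
  obtain ⟨r, a, b, ha, hb, hE⟩ := hcycle
  intro hrad
  set f : MvPolynomial (Fin m × Fin n) K := (∏ k, X (a k, b k)) - ∏ k, X (a (k + 1), b k)
  have hpow : X (0, 0) ^ (r + 2) * f ∈ minorIdeal K C := by
    simpa using hC.X_zero_pow_mul_sub_mem (K := K) (Equiv.addRight 1) (fun k => (hE k).1.1)
      fun k => (hE k).2.1
  have hmem : X (0, 0) * f ∈ minorIdeal K C := hrad ⟨r + 2, by
    rw [mul_pow, pow_succ f, mul_left_comm]
    exact Ideal.mul_mem_left _ _ hpow⟩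
  let x : Fin m × Fin n → K := fun p => if ∃ k, (a k, b k) = p then 1 else 0
  have hx (p) (hp : x p ≠ 0) : p.1 ≠ 0 ∧ p.2 ≠ 0 := by
    obtain ⟨k, rfl⟩ := (ite_ne_right_iff.1 hp).1
    exact (hE k).1.2
  have hprod : ∏ k, x (a k, b k) = 1 := Finset.prod_eq_one fun k _ => if_pos ⟨k, rfl⟩
  have hprod' : ∏ k, x (a (k + 1), b k) = 0 :=
    Finset.prod_eq_zero (Finset.mem_univ 0) (if_neg fun ⟨k, hk⟩ => by
      obtain ⟨hak, hbk⟩ := Prod.ext_iff.1 hk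
      simpa [hb hbk] using ha hak)
  have heval : eval x f = 1 := by
    simp only [f, map_sub, map_prod, eval_X, hprod, hprod', sub_zero]
  exact one_ne_zero (heval.symm.trans (hC.eval_eq_zero_of_X_zero_mul_mem hx hmem))

theorem IsCornerSet.row_exchange_mem_colon (hC : IsCornerSet C) (hp : p ∈ vertexSetOf C)
    (hq : q ∈ vertexSetOf C) (h : q.1 = p.1) :
    X (0, p.2) * X q - X p * X (0, q.2) ∈ (minorIdeal K C).colon {X (0, 0)} := by
  rw [Submodule.mem_colon_singleton, smul_eq_mul]
  convert sub_mem (Ideal.mul_mem_left _ (X (0, p.2)) (hC.cornerBinom_mem (K := K) hq))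
    (Ideal.mul_mem_left _ (X (0, q.2)) (hC.cornerBinom_mem hp)) using 1
  rw [cornerBinom, cornerBinom, h]
  ring

theorem IsCornerSet.col_exchange_mem_colon (hC : IsCornerSet C) (hp : p ∈ vertexSetOf C)
    (hq : q ∈ vertexSetOf C) (h : q.2 = p.2) :
    X q * X (p.1, 0) - X p * X (q.1, 0) ∈ (minorIdeal K C).colon {X (0, 0)} := by
  rw [Submodule.mem_colon_singleton, smul_eq_mul]
  convert sub_mem (Ideal.mul_mem_left _ (X (p.1, 0)) (hC.cornerBinom_mem (K := K) hq))
    (Ideal.mul_mem_left _ (X (q.1, 0)) (hC.cornerBinom_mem hp)) using 1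
  rw [cornerBinom, cornerBinom, h]
  ring

/-- In `T`, the interval of `p` in one of the two directions contains, apart from `p`, at most
the vertex in row or column `0`. -/
def IsInnerLeaf (C : Set (Minor2 m n)) (T : Set (Fin m × Fin n)) (p : Fin m × Fin n) : Prop :=
  (∀ q ∈ T, vClass C q = vClass C p → q.1 = 0 ∨ q = p) ∨
    ∀ q ∈ T, hClass C q = hClass C p → q.2 = 0 ∨ q = p

theorem IsInnerLeaf.mono {T T' : Set (Fin m × Fin n)} (h : IsInnerLeaf C T p) (hT : T' ⊆ T) :
    IsInnerLeaf C T' p :=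
  h.imp (fun h q hq => h q (hT hq)) fun h q hq => h q (hT hq)

theorem IsCornerSet.exchangeable_of_isInnerLeaf (hC : IsCornerSet C)
    {v : Multiset (Fin m × Fin n)} (hp : IsInnerLeaf C {q | q ∈ v} p) :
    Exchangeable (hClass C) (vClass C)
      (fun p => Ideal.Quotient.mk ((minorIdeal K C).colon {X (0, 0)}) (X p)) p v := by
  intro q hq s hs hqp hsp
  have hcol := snd_eq_of_vClass_eq hqp
  have hrow := fst_eq_of_hClass_eq hsp
  obtain rfl | hqne := eq_or_ne q p
  · exact ⟨s, hsp, rfl, rfl⟩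
  obtain rfl | hsne := eq_or_ne s p
  · exact ⟨q, rfl, hqp, mul_comm _ _⟩
  obtain ⟨hqC, hpC⟩ := (eq_or_mem_of_vClass_eq hqp).resolve_left hqne
  obtain ⟨hsC, -⟩ := (eq_or_mem_of_hClass_eq hsp).resolve_left hsne
  rcases hp with hp | hp
  · obtain rfl : q = (0, p.2) := Prod.ext ((hp q hq hqp).resolve_right hqne) hcol
    exact ⟨(0, s.2), (hC.hClass_eq_iff (hC.row_zero_mem hsC) hqC).2 rfl, hC.vClass_row_zero hsC,
      Ideal.Quotient.eq.2 (hC.row_exchange_mem_colon hpC hsC hrow)⟩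
  · obtain rfl : s = (p.1, 0) := Prod.ext hrow ((hp s hs hsp).resolve_right hsne)
    exact ⟨(q.1, 0), hC.hClass_col_zero hqC, (hC.vClass_eq_iff (hC.col_zero_mem hqC) hsC).2 rfl,
      Ideal.Quotient.eq.2 (hC.col_exchange_mem_colon hpC hqC hcol)⟩

theorem exists_isInnerLeaf (hforest : ¬HasAlternatingCycle (InnerEdge C))
    {T : Set (Fin m × Fin n)} (hT : T.Nonempty) : ∃ p ∈ T, IsInnerLeaf C T p := by
  by_cases hinner : {p ∈ T | InnerEdge C p.1 p.2}.Nonempty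
  · obtain ⟨p, ⟨hpT, hp⟩, hleaf⟩ := exists_leaf hforest hinner fun p hp => hp.2
    refine ⟨p, hpT, hleaf.imp (fun hleaf q hq hqp => ?_) fun hleaf q hq hqp => ?_⟩
    · have hcol := snd_eq_of_vClass_eq hqp
      refine or_iff_not_imp_left.2 fun hq₁ => (eq_or_mem_of_vClass_eq hqp).elim id fun hqC => ?_
      exact hleaf q ⟨hq, hqC.1, hq₁, hcol ▸ hp.2.2⟩ hcol
    · have hrow := fst_eq_of_hClass_eq hqp
      refine or_iff_not_imp_left.2 fun hq₂ => (eq_or_mem_of_hClass_eq hqp).elim id fun hqC => ?_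
      exact hleaf q ⟨hq, hqC.1, hrow ▸ hp.2.1, hq₂⟩ hrow
  · have hborder (q) (hq : q ∈ T) (hqC : q ∈ vertexSetOf C) : q.1 = 0 ∨ q.2 = 0 := by
      by_contra! h
      exact hinner ⟨q, hq, hqC, h⟩
    by_cases hzero : ∀ q ∈ T, q = (0, 0)
    · exact hT.imp fun p hp => ⟨hp, Or.inl fun q hq _ => Or.inl (Prod.ext_iff.1 (hzero q hq)).1⟩
    obtain ⟨p, hp, hp₀⟩ := not_forall₂.1 hzero
    refine ⟨p, hp, ?_⟩
    obtain hp₂ | hp₂ := ne_or_eq p.2 0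
    · refine Or.inl fun q hq hqp => (eq_or_mem_of_vClass_eq hqp).symm.imp_left fun hqC => ?_
      exact (hborder q hq hqC.1).resolve_right (snd_eq_of_vClass_eq hqp ▸ hp₂)
    · refine Or.inr fun q hq hqp => (eq_or_mem_of_hClass_eq hqp).symm.imp_left fun hqC => ?_
      exact (hborder q hq hqC.1).resolve_left
        (fst_eq_of_hClass_eq hqp ▸ fun hp₁ => hp₀ (Prod.ext hp₁ hp₂))

theorem IsCornerSet.toricIdeal_le_colon (hC : IsCornerSet C)
    (hforest : ¬HasAlternatingCycle (InnerEdge C)) :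
    toricIdeal K C ≤ (minorIdeal K C).colon {X (0, 0)} := by
  set Q := (minorIdeal K C).colon {X (0, 0)}
  have hker : RingHom.ker (Ideal.Quotient.mkₐ K Q) = Q := Ideal.Quotient.mkₐ_ker K Q
  rw [← hker]
  refine ker_le_ker_of_sameMarginals _ fun u v huv =>
    prod_map_eq_of_exchangeable (injective_hClass_vClass C) (fun u v hu _ => ?_) huv
  obtain ⟨p₀, hp₀⟩ := Multiset.exists_mem_of_ne_zero hu
  obtain ⟨p, hp, hleaf⟩ := exists_isInnerLeaf (T := {q | q ∈ u} ∪ {q | q ∈ v}) hforest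
    ⟨p₀, Or.inl hp₀⟩
  exact hp.imp
    (fun hp => ⟨p, hp, hC.exchangeable_of_isInnerLeaf (hleaf.mono Set.subset_union_right)⟩)
    fun hp => ⟨p, hp, hC.exchangeable_of_isInnerLeaf (hleaf.mono Set.subset_union_left)⟩

theorem IsCornerSet.minorIdeal_sup_span_eq (hC : IsCornerSet C) :
    minorIdeal K C ⊔ Ideal.span {X (0, 0)} =
      Ideal.span ((fun s : Finset (Fin m × Fin n) => ∏ i ∈ s, X i) ''
        insert {(0, 0)} ((fun p : Fin m × Fin n => {(0, p.2), (p.1, 0)}) ''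
          {p | InnerEdge C p.1 p.2})) := by
  rw [hC.minorIdeal_eq_span, Set.image_insert_eq, Set.image_image, Finset.prod_singleton,
    Set.insert_eq, Ideal.span_union, sup_comm]
  set J : Ideal (MvPolynomial (Fin m × Fin n) K) := Ideal.span {X (0, 0)}
  have hX : X (0, 0) ∈ J := Ideal.mem_span_singleton_self _
  have hprod (p) (hp : InnerEdge C p.1 p.2) :
      (∏ i ∈ ({(0, p.2), (p.1, 0)} : Finset (Fin m × Fin n)), X i : MvPolynomial _ K) =
        X (0, 0) * X p - cornerBinom K p := by
    rw [Finset.prod_pair (by simp [hp.2.1.symm]), cornerBinom, sub_sub_cancel]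
  refine le_antisymm (sup_le le_sup_left (Ideal.span_le.2 ?_))
    (sup_le le_sup_left (Ideal.span_le.2 ?_)) <;> rintro _ ⟨p, hp, rfl⟩
  · rw [← sub_sub_cancel (X (0, 0) * X p) (cornerBinom K p), ← hprod p hp]
    exact sub_mem (Ideal.mem_sup_left (J.mul_mem_right _ hX))
      (Ideal.mem_sup_right (Ideal.subset_span ⟨p, hp, rfl⟩))
  · beta_reduce
    rw [SetLike.mem_coe, hprod p hp]
    exact sub_mem (Ideal.mem_sup_left (J.mul_mem_right _ hX))
      (Ideal.mem_sup_right (Ideal.subset_span ⟨p, hp, rfl⟩))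

theorem IsCornerSet.isRadical_of_not_hasAlternatingCycle (hC : IsCornerSet C)
    (hforest : ¬HasAlternatingCycle (InnerEdge C)) : (minorIdeal K C).IsRadical := by
  refine isRadical_of_le_colon (toricIdeal_isPrime K C) (minorIdeal_le_toricIdeal K C)
    (X_notMem_toricIdeal K C (0, 0)) (hC.toricIdeal_le_colon hforest) ?_
  rw [hC.minorIdeal_sup_span_eq]
  exact isRadical_span_prod_X _

theorem IsCornerSet.isRadical_iff_not_hasAlternatingCycle (hC : IsCornerSet C) :
    (minorIdeal K C).IsRadical ↔ ¬HasAlternatingCycle (InnerEdge C) :=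
  ⟨fun hrad hcycle => hC.not_isRadical_of_hasAlternatingCycle hcycle hrad,
    hC.isRadical_of_not_hasAlternatingCycle⟩

end Corner

theorem statement12 (K : Type*) [Field K] (m n : ℕ) [NeZero m] [NeZero n]
    (C : Set (Minor2 m n)) (hC : ∀ δ ∈ C, δ.a1 = 0 ∧ δ.b1 = 0) :
    ((minorIdeal K C).radical = minorIdeal K C ↔
      ¬ ∃ σ : CycleIn C,
        (∀ k, vClass C (σ.p k) ≠ vClass C ((0 : Fin m), (0 : Fin n))) ∧
        (∀ k, hClass C (σ.p k) ≠ hClass C ((0 : Fin m), (0 : Fin n)))) ∧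
    ((¬ ∃ σ : CycleIn C,
        (∀ k, vClass C (σ.p k) ≠ vClass C ((0 : Fin m), (0 : Fin n))) ∧
        (∀ k, hClass C (σ.p k) ≠ hClass C ((0 : Fin m), (0 : Fin n)))) →
      minorIdeal K C =
        ⨅ W ∈ {W : Set (Fin m × Fin n) |
          Admissible C W ∧ PW K C W ∈ (minorIdeal K C).minimalPrimes},
          PW K C W) := by
  have hC' : IsCornerSet C := hC
  rw [hC'.exists_cycleIn_iff_hasAlternatingCycle, Ideal.radical_eq_iff]
  exact ⟨hC'.isRadical_iff_not_hasAlternatingCycle,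
    fun hforest => hC'.minorIdeal_eq_iInf_PW (hC'.isRadical_of_not_hasAlternatingCycle hforest)⟩
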